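/- Let n be a positive integer, k ∈ {0,1,...,n−1} and σ > 0. Regard the Gaudi function entry d_w^σ[k] = e^{−k²/(2σ²)} · w · sinc(wk/n)/sinc(k/n) · e^{iπk(1−w)/n} as a complex-valued function of the real variable w. Then at every w ∈ ℝ this function has derivative with respect to w equal to e^{−2πi·kw/n} · e^{iπk/n} · e^{−k²/(2σ²)} / sinc(k/n). -/

import Mathlib

open BigOperators

/-- The normalized sinc function: `sinc x = sin(πx)/(πx)` for `x ≠ 0`, `sinc 0 = 1`. -/
noncomputable def sinc (x : ℝ) : ℝ :=
  if x = 0 then 1 else Real.sin (Real.pi * x) / (Real.pi * x)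

/-- The Gaudi (Gaussian-Dirichlet) function with real-valued width `w`:
`d_w^σ[k] = e^{−k²/(2σ²)} · w · sinc(wk/n)/sinc(k/n) · e^{iπk(1−w)/n}`. -/
noncomputable def dKerR (n : ℕ) (σ : ℝ) (w : ℝ) (k : ℕ) : ℂ :=
  (Real.exp (-(k : ℝ) ^ 2 / (2 * σ ^ 2)) : ℝ)
    * ((w * sinc (w * k / n) / sinc ((k : ℝ) / n) : ℝ) : ℂ)
    * Complex.exp (Complex.I * (Real.pi : ℂ) * (k : ℂ) * (1 - (w : ℂ)) / (n : ℂ))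

/-!
Write `a = k / n`. Since `π a · (w sinc (w a)) = sin (π a w)`, the factor `w sinc (w a)` has
derivative `cos (π a w)` for every `a`, including `a = 0`. The phase `e^{iπa(1-w)}` has logarithmic
derivative `-iπa`, so the product rule gives `(cos (π a w) - i sin (π a w)) e^{iπa(1-w)}`, which
Euler's formula turns into `e^{-2πiaw} e^{iπa}`.
-/

theorem sinc_zero : sinc 0 = 1 := if_pos rfl

theorem pi_mul_mul_sinc (x : ℝ) : Real.pi * x * sinc x = Real.sin (Real.pi * x) := by
  rcases eq_or_ne x 0 with rfl | hx
  · simp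
  · rw [sinc, if_neg hx, mul_div_cancel₀ _ (mul_ne_zero Real.pi_ne_zero hx)]

theorem sinc_ne_zero_of_abs_lt_one {x : ℝ} (hx : |x| < 1) : sinc x ≠ 0 := by
  intro hzero
  obtain ⟨hlower, hupper⟩ := abs_lt.mp hx
  have hsin : Real.sin (Real.pi * x) = 0 := by rw [← pi_mul_mul_sinc, hzero, mul_zero]
  have hpix : Real.pi * x = 0 :=
    (Real.sin_eq_zero_iff_of_lt_of_lt (by nlinarith [Real.pi_pos]) (by nlinarith [Real.pi_pos])).mp
      hsin
  have hx0 : x = 0 := (mul_eq_zero.mp hpix).resolve_left Real.pi_ne_zero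
  rw [hx0, sinc_zero] at hzero
  exact one_ne_zero hzero

theorem sinc_natCast_div_ne_zero {k n : ℕ} (hk : k < n) : sinc ((k : ℝ) / n) ≠ 0 := by
  have hn : (0 : ℝ) < n := Nat.cast_pos.mpr (Nat.zero_lt_of_lt hk)
  refine sinc_ne_zero_of_abs_lt_one ?_
  rw [abs_of_nonneg (by positivity), div_lt_one hn]
  exact Nat.cast_lt.mpr hk

theorem hasDerivAt_mul_sinc (a w : ℝ) :
    HasDerivAt (fun t : ℝ => t * sinc (t * a)) (Real.cos (Real.pi * (w * a))) w := by
  rcases eq_or_ne a 0 with rfl | ha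
  · simpa [sinc_zero] using hasDerivAt_id' w
  · have hpia : Real.pi * a ≠ 0 := mul_ne_zero Real.pi_ne_zero ha
    have heq : (fun t : ℝ => t * sinc (t * a)) =
        fun t => Real.sin (Real.pi * (t * a)) / (Real.pi * a) := by
      funext t
      rw [eq_div_iff hpia, ← pi_mul_mul_sinc]
      ring
    have hphase : HasDerivAt (fun t : ℝ => Real.pi * (t * a)) (Real.pi * a) w :=
      (hasDerivAt_mul_const a).const_mul Real.pi
    rw [heq]
    exact (hphase.sin.div_const (Real.pi * a)).congr_deriv (mul_div_cancel_right₀ _ hpia)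

theorem hasDerivAt_mul_sinc_mul_cexp (a w : ℝ) :
    HasDerivAt
      (fun t : ℝ => ((t * sinc (t * a) : ℝ) : ℂ) * Complex.exp (Complex.I * Real.pi * a * (1 - t)))
      (Complex.exp (-2 * Real.pi * Complex.I * a * w) * Complex.exp (Complex.I * Real.pi * a))
      w := by
  have hphase : HasDerivAt (fun t : ℝ => Complex.I * Real.pi * a * (1 - (t : ℂ)))
      (-(Complex.I * Real.pi * a)) w := by
    simpa using
      (((hasDerivAt_id (w : ℂ)).const_sub 1).const_mul (Complex.I * Real.pi * a)).comp_ofReal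
  have hsin : (Real.pi * a * (w * sinc (w * a) : ℝ) : ℂ) = Complex.sin (Real.pi * (w * a)) := by
    have hreal : Real.pi * a * (w * sinc (w * a)) = Real.sin (Real.pi * (w * a)) := by
      rw [← pi_mul_mul_sinc]
      ring
    exact_mod_cast hreal
  refine ((hasDerivAt_mul_sinc a w).ofReal_comp.mul hphase.cexp).congr_deriv ?_
  set E := Complex.exp (Complex.I * Real.pi * a * (1 - w))
  calc
    _ = (Complex.cos (Real.pi * (w * a)) - Complex.sin (Real.pi * (w * a)) * Complex.I) * E := by
      rw [← hsin]
      push_cast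
      ring
    _ = Complex.exp (-(Real.pi * (w * a)) * Complex.I) * E := by
      rw [Complex.exp_mul_I, Complex.cos_neg, Complex.sin_neg]
      ring
    _ = _ := by
      rw [← Complex.exp_add, ← Complex.exp_add]
      ring_nf

theorem dKerR_eq_div_mul (n : ℕ) (σ w : ℝ) (k : ℕ) :
    dKerR n σ w k = (Real.exp (-(k : ℝ) ^ 2 / (2 * σ ^ 2)) : ℂ) / (sinc ((k : ℝ) / n) : ℂ) *
      (((w * sinc (w * ((k : ℝ) / n)) : ℝ) : ℂ) *
        Complex.exp (Complex.I * Real.pi * ((k : ℝ) / n : ℝ) * (1 - w))) := by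
  rw [dKerR, mul_div_assoc w (k : ℝ)]
  push_cast
  ring_nf

theorem hasDerivAt_dKerR_general (n : ℕ) (hn : n ≠ 0) (k : ℕ) (hk : sinc ((k : ℝ) / n) ≠ 0)
    (σ : ℝ) (hσ : σ ≠ 0) (w : ℝ) :
    HasDerivAt (fun t : ℝ => dKerR n σ t k)
      (Complex.exp (-2 * (Real.pi : ℂ) * Complex.I * (k : ℂ) * (w : ℂ) / (n : ℂ))
        * Complex.exp (Complex.I * (Real.pi : ℂ) * (k : ℂ) / (n : ℂ))
        * ((Real.exp (-(k : ℝ) ^ 2 / (2 * σ ^ 2)) : ℝ) : ℂ)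
        / ((sinc ((k : ℝ) / n) : ℝ) : ℂ)) w := by
  simp_rw [dKerR_eq_div_mul]
  refine ((hasDerivAt_mul_sinc_mul_cexp ((k : ℝ) / n) w).const_mul _).congr_deriv ?_
  push_cast
  ring_nf

/-- Derivative of the Gaudi function entry with respect to the (real) width:
`∂/∂w d_w^σ[k] = e^{−2πi·kw/n} · e^{iπk/n} · e^{−k²/(2σ²)} / sinc(k/n)`. -/
theorem hasDerivAt_dKerR (n : ℕ) (hn : 0 < n) (k : ℕ) (hk : k < n)
    (σ : ℝ) (hσ : 0 < σ) (w : ℝ) :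
    HasDerivAt (fun t : ℝ => dKerR n σ t k)
      (Complex.exp (-2 * (Real.pi : ℂ) * Complex.I * (k : ℂ) * (w : ℂ) / (n : ℂ))
        * Complex.exp (Complex.I * (Real.pi : ℂ) * (k : ℂ) / (n : ℂ))
        * ((Real.exp (-(k : ℝ) ^ 2 / (2 * σ ^ 2)) : ℝ) : ℂ)
        / ((sinc ((k : ℝ) / n) : ℝ) : ℂ)) w := by
  exact hasDerivAt_dKerR_general n hn.ne' k (sinc_natCast_div_ne_zero hk) σ hσ.ne' w
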